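/- Let R be a Noetherian ring of finite Krull dimension and M a nonzero finitely generated R-module. Then log_ω(len_R M) = dim M; that is, the degree of the Cantor normal form of the ordinal length of M equals the Krull dimension of M. -/

import Mathlib

open Ordinal

/-- The ordinal length of a Noetherian module: the rank of the zero submodule in the
well-founded order of submodules under reverse inclusion. -/
noncomputable def moduleLength (R M : Type*) [Ring R] [AddCommGroup M] [Module R M]
    [IsNoetherian R M] : Ordinal :=
  IsWellFounded.rank (α := Submodule R M) (· > ·) ⊥

universe u v

/-- A substitute for the natural sum of ordinals below `ω ^ d`: a strictly monotone binary
operation which preserves that bound. -/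
theorem Ordinal.exists_strictMono_op_lt_omega0_opow (d : ℕ) :
    ∃ G : Ordinal.{v} → Ordinal.{v} → Ordinal.{v},
      (∀ a < ω ^ (d : Ordinal.{v}), ∀ b < ω ^ (d : Ordinal.{v}), G a b < ω ^ (d : Ordinal.{v})) ∧
      ∀ a b a' b', a' < ω ^ (d : Ordinal.{v}) → b' < ω ^ (d : Ordinal.{v}) →
        a ≤ a' → b ≤ b' → (a < a' ∨ b < b') → G a b < G a' b' := by
  induction d with
  | zero =>
    refine ⟨fun _ _ ↦ 0, by simp, fun a b a' b' ha' hb' _ _ h ↦ ?_⟩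
    simp only [Nat.cast_zero, opow_zero, Order.lt_one_iff] at ha' hb'
    simp [ha', hb'] at h
  | succ d ih =>
    obtain ⟨G, hlt, hmono⟩ := ih
    set w : Ordinal.{v} := ω ^ (d : Ordinal.{v}) with hw
    have w0 : w ≠ 0 := (opow_pos _ omega0_pos).ne'
    have hsucc : (ω : Ordinal.{v}) ^ ((d + 1 : ℕ) : Ordinal.{v}) = w * ω := by
      rw [Nat.cast_add, Nat.cast_one, opow_add, opow_one]
    have hGlt (a b : Ordinal.{v}) : G (a % w) (b % w) < w := hlt _ (mod_lt a w0) _ (mod_lt b w0)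
    have hdiv {a : Ordinal.{v}} (ha : a < w * ω) : ∃ n : ℕ, a / w = n :=
      lt_omega0.1 ((lt_mul_iff_div_lt w0).1 ha)
    have hstep {s t x : Ordinal.{v}} (hx : x < w) (hst : s < t) : w * s + x < w * t :=
      calc w * s + x < w * s + w := by gcongr
        _ = w * (s + 1) := by rw [mul_add, mul_one]
        _ ≤ w * t := by gcongr; exact Order.add_one_le_of_lt hst
    rw [hsucc]
    refine ⟨fun a b ↦ w * (a / w + b / w) + G (a % w) (b % w), fun a ha b hb ↦ ?_,
      fun a b a' b' ha' hb' haa hbb h ↦ ?_⟩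
    · obtain ⟨m, hm⟩ := hdiv ha
      obtain ⟨n, hn⟩ := hdiv hb
      refine hstep (hGlt a b) ?_
      rw [hm, hn, ← Nat.cast_add]
      exact natCast_lt_omega0 _
    · obtain ⟨m, hm⟩ := hdiv (haa.trans_lt ha')
      obtain ⟨n, hn⟩ := hdiv (hbb.trans_lt hb')
      obtain ⟨m', hm'⟩ := hdiv ha'
      obtain ⟨n', hn'⟩ := hdiv hb'
      have hmm : m ≤ m' := by
        have : a / w ≤ a' / w := div_le_left haa w
        rw [hm, hm'] at this
        exact_mod_cast this
      have hnn : n ≤ n' := by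
        have : b / w ≤ b' / w := div_le_left hbb w
        rw [hn, hn'] at this
        exact_mod_cast this
      have ea := div_add_mod a w
      have ea' := div_add_mod a' w
      have eb := div_add_mod b w
      have eb' := div_add_mod b' w
      simp only [hm, hn, hm', hn'] at ea ea' eb eb' ⊢
      rcases lt_or_ge (m + n) (m' + n') with hlt' | hge
      · refine (hstep (hGlt a b) ?_).trans_le le_self_add
        exact_mod_cast hlt'
      · obtain rfl : m = m' := by omega
        obtain rfl : n = n' := by omega
        gcongr
        rw [← ea, ← ea', ← eb, ← eb'] at h
        rw [← ea, ← ea'] at haa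
        rw [← eb, ← eb'] at hbb
        simp only [add_lt_add_iff_left, add_le_add_iff_left] at h haa hbb
        exact hmono _ _ _ _ (mod_lt a' w0) (mod_lt b' w0) haa hbb h

theorem WellFoundedGT.rank_le_of_strictAnti {α : Type v} [Preorder α] [WellFoundedGT α]
    {f : α → Ordinal.{v}} (hf : StrictAnti f) (a : α) :
    IsWellFounded.rank (α := α) (· > ·) a ≤ f a := by
  induction a using WellFoundedGT.induction with
  | ind a ih =>
    rw [IsWellFounded.rank_eq]
    exact Ordinal.iSup_le fun b ↦ Order.succ_le_of_lt ((ih b b.2).trans_lt (hf b.2))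

theorem WellFoundedGT.rank_apply_le_of_strictMono {α β : Type v} [Preorder α] [WellFoundedGT α]
    [Preorder β] [WellFoundedGT β] {f : α → β} (hf : StrictMono f) (a : α) :
    IsWellFounded.rank (α := α) (· > ·) a ≤ IsWellFounded.rank (α := β) (· > ·) (f a) :=
  rank_le_of_strictAnti (WellFoundedGT.rank_strictAnti.comp_strictMono hf) a

section ModuleLength

variable {R : Type u} [CommRing R] {M : Type v} [AddCommGroup M] [Module R M] [IsNoetherian R M]

theorem rank_submodule_le_moduleLength_quotient (N : Submodule R M) :
    IsWellFounded.rank (α := Submodule R M) (· > ·) N ≤ moduleLength R (M ⧸ N) := by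
  have hmono : StrictMono fun K : Set.Ici N ↦ K.1.map N.mkQ := fun K L h ↦ by
    refine lt_of_le_of_ne (Submodule.map_mono h.le) fun heq ↦ h.ne (Subtype.ext ?_)
    have := congrArg (Submodule.comap N.mkQ) heq
    have hK : N ≤ K.1 := K.2
    have hL : N ≤ L.1 := L.2
    simpa [Submodule.comap_map_eq, sup_eq_left.2 hK, sup_eq_left.2 hL] using this
  have hrank (K : Set.Ici N) : IsWellFounded.rank (α := Submodule R M) (· > ·) K.1 ≤
      IsWellFounded.rank (α := Set.Ici N) (· > ·) K := by
    induction K using WellFoundedGT.induction with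
    | ind K ih =>
      rw [IsWellFounded.rank_eq]
      refine Ordinal.iSup_le fun L ↦ Order.succ_le_of_lt ?_
      have hKL : K < ⟨L.1, le_trans K.2 (le_of_lt L.2)⟩ := L.2
      exact (ih _ hKL).trans_lt (WellFoundedGT.rank_strictAnti hKL)
  refine (hrank ⟨N, le_refl N⟩).trans ((WellFoundedGT.rank_apply_le_of_strictMono hmono _).trans ?_)
  exact WellFoundedGT.rank_strictAnti.antitone bot_le

theorem moduleLength_le_of_forall_ne_bot {o : Ordinal.{v}}
    (h : ∀ N : Submodule R M, N ≠ ⊥ → moduleLength R (M ⧸ N) < o) : moduleLength R M ≤ o := by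
  rw [moduleLength, IsWellFounded.rank_eq]
  exact Ordinal.iSup_le fun N ↦ Order.succ_le_of_lt
    ((rank_submodule_le_moduleLength_quotient N.1).trans_lt (h N.1 (bot_lt_iff_ne_bot.1 N.2)))

theorem moduleLength_lt_omega0_opow_of_exact {N P : Type v} [AddCommGroup N] [Module R N]
    [IsNoetherian R N] [AddCommGroup P] [Module R P] [IsNoetherian R P]
    {f : N →ₗ[R] M} {g : M →ₗ[R] P} (hfg : Function.Exact f g) {d : ℕ}
    (hN : moduleLength R N < ω ^ (d : Ordinal.{v})) (hP : moduleLength R P < ω ^ (d : Ordinal.{v})) :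
    moduleLength R M < ω ^ (d : Ordinal.{v}) := by
  obtain ⟨G, hlt, hmono⟩ := Ordinal.exists_strictMono_op_lt_omega0_opow.{v} d
  have hN' (K : Submodule R N) :
      IsWellFounded.rank (α := Submodule R N) (· > ·) K < ω ^ (d : Ordinal.{v}) :=
    (WellFoundedGT.rank_strictAnti.antitone bot_le).trans_lt hN
  have hP' (K : Submodule R P) :
      IsWellFounded.rank (α := Submodule R P) (· > ·) K < ω ^ (d : Ordinal.{v}) :=
    (WellFoundedGT.rank_strictAnti.antitone bot_le).trans_lt hP
  have hanti : StrictAnti fun K : Submodule R M ↦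
      G (IsWellFounded.rank (α := Submodule R N) (· > ·) (K.comap f))
        (IsWellFounded.rank (α := Submodule R P) (· > ·) (K.map g)) := by
    intro K L hKL
    have h₁ : K.comap f ≤ L.comap f := Submodule.comap_mono hKL.le
    have h₂ : K.map g ≤ L.map g := Submodule.map_mono hKL.le
    refine hmono _ _ _ _ (hN' _) (hP' _) (WellFoundedGT.rank_strictAnti.antitone h₁)
      (WellFoundedGT.rank_strictAnti.antitone h₂) ?_
    by_contra! hcon
    have e₁ : K.comap f = L.comap f := h₁.eq_of_not_lt fun h ↦
      (WellFoundedGT.rank_strictAnti h).not_ge hcon.1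
    have e₂ : K.map g = L.map g := h₂.eq_of_not_lt fun h ↦
      (WellFoundedGT.rank_strictAnti h).not_ge hcon.2
    refine hKL.not_ge fun x hx ↦ ?_
    obtain ⟨y, hy, hyx⟩ : g x ∈ K.map g := e₂ ▸ Submodule.mem_map_of_mem hx
    obtain ⟨z, hz⟩ := (hfg (x - y)).1 (by rw [map_sub, hyx, _root_.sub_self])
    have hzL : z ∈ L.comap f := by
      rw [Submodule.mem_comap, hz]
      exact L.sub_mem hx (hKL.le hy)
    rw [← e₁, Submodule.mem_comap, hz] at hzL
    simpa using K.add_mem hzL hy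
  exact (WellFoundedGT.rank_le_of_strictAnti hanti ⊥).trans_lt (hlt _ (hN' _) _ (hP' _))

end ModuleLength

open scoped Pointwise in
theorem Module.supportDim_quotient_add_one_le_of_equiv_quotient_prime {R : Type u} [CommRing R]
    {M : Type v} [AddCommGroup M] [Module R M] [Module.Finite R M]
    {p : Ideal R} [p.IsPrime] (e : M ≃ₗ[R] R ⧸ p) {N : Submodule R M} (hN : N ≠ ⊥) :
    Module.supportDim R (M ⧸ N) + 1 ≤ Module.supportDim R M := by
  obtain ⟨y, hyN, hy0⟩ := N.ne_bot_iff.1 hN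
  obtain ⟨a, ha⟩ := Ideal.Quotient.mk_surjective (e y)
  have hap : a ∉ p := fun h ↦ hy0 <| by
    rw [← e.map_eq_zero_iff, ← ha]
    exact Ideal.Quotient.eq_zero_iff_mem.2 h
  have hann : Module.annihilator R M = p := by
    rw [e.annihilator_eq, Ideal.annihilator_quotient]
  have hle : a • (⊤ : Submodule R M) ≤ N := by
    intro x hx
    obtain ⟨z, -, rfl⟩ := (Submodule.mem_smul_pointwise_iff_exists _ _ _).1 hx
    obtain ⟨b, hb⟩ := Ideal.Quotient.mk_surjective (e z)
    have : a • z = b • y := e.injective <| by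
      rw [map_smul, map_smul, ← ha, ← hb, Algebra.smul_def, Algebra.smul_def, mul_comm]
      rfl
    rw [this]
    exact N.smul_mem b hyN
  refine le_trans ?_ (Module.supportDim_quotSMulTop_succ_le_of_notMem_minimalPrimes (x := a) ?_)
  · gcongr
    exact Module.supportDim_le_of_surjective (Submodule.factor hle) (Submodule.factor_surjective hle)
  · rw [hann, Ideal.minimalPrimes_eq_subsingleton_self]
    simpa using hap

theorem moduleLength_lt_omega0_opow_of_supportDim_lt {R : Type u} [CommRing R] [IsNoetherianRing R]
    (d : ℕ) : ∀ (M : Type v) [AddCommGroup M] [Module R M] [Module.Finite R M],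
      Module.supportDim R M < d → moduleLength R M < ω ^ (d : Ordinal.{v}) := by
  have hsub (M : Type v) [AddCommGroup M] [Module R M] [IsNoetherian R M] [Subsingleton M] (d : ℕ) :
      moduleLength R M < ω ^ (d : Ordinal.{v}) :=
    (moduleLength_le_of_forall_ne_bot fun N hN ↦ absurd (Subsingleton.elim N ⊥) hN).trans_lt
      (opow_pos _ omega0_pos)
  induction d with
  | zero =>
    intro M _ _ _ h
    have : Subsingleton M := by
      by_contra hM
      rw [not_subsingleton_iff_nontrivial] at hM
      have hbot := Module.supportDim_ne_bot_of_nontrivial R M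
      obtain ⟨n, hn⟩ := WithBot.ne_bot_iff_exists.1 hbot
      rw [← hn] at h
      exact not_lt_zero (WithBot.coe_lt_coe.1 h)
    exact hsub M 0
  | succ d ih =>
    intro M _ _ hM
    induction hM using IsNoetherianRing.induction_on_isQuotientEquivQuotientPrime R with
    | subsingleton N => exact fun _ ↦ hsub N _
    | quotient N p e =>
      intro h
      refine (moduleLength_le_of_forall_ne_bot fun K hK ↦ ih (N ⧸ K) ?_).trans_lt
        ((opow_lt_opow_iff_right one_lt_omega0).2 (by exact_mod_cast d.lt_succ_self))
      have := (Module.supportDim_quotient_add_one_le_of_equiv_quotient_prime e hK).trans_lt h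
      rw [Nat.cast_succ] at this
      exact lt_of_add_lt_add_right this
    | exact N₁ N₂ N₃ f g hf hg hfg h₁ h₃ =>
      exact fun h ↦ moduleLength_lt_omega0_opow_of_exact hfg
        (h₁ ((Module.supportDim_le_of_injective f hf).trans_lt h))
        (h₃ ((Module.supportDim_le_of_surjective g hg).trans_lt h))

theorem PrimeSpectrum.rank_add_omega0_opow_le_of_le_coheight {R : Type u} [CommRing R]
    {α : Type v} [PartialOrder α] [WellFoundedGT α] (d : ℕ) :
    ∀ (q : PrimeSpectrum R), d ≤ Order.coheight q →
      ∀ g : Ideal R → α, StrictMonoOn g (Set.Ici q.asIdeal) →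
      IsWellFounded.rank (α := α) (· > ·) (g ⊤) + ω ^ (d : Ordinal.{v}) ≤
        IsWellFounded.rank (α := α) (· > ·) (g q.asIdeal) := by
  induction d with
  | zero =>
    intro q _ g hg
    rw [Nat.cast_zero, opow_zero]
    exact Order.add_one_le_of_lt (WellFoundedGT.rank_strictAnti
      (hg (Set.mem_Ici.2 le_rfl) (Set.mem_Ici.2 le_top) (lt_top_iff_ne_top.2 q.2.ne_top)))
  | succ d ih =>
    intro q hq g hg
    obtain ⟨q', hqq', hq'⟩ : ∃ q' > q, d ≤ Order.coheight q' := by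
      by_contra! hcon
      have h₁ := hq.trans (Order.coheight_le_coe_iff.2 hcon)
      exact absurd (Nat.cast_le.1 h₁) (by omega)
    have hle : q.asIdeal ≤ q'.asIdeal := hqq'.le
    obtain ⟨x, hx', hx⟩ := SetLike.exists_of_lt (show q.asIdeal < q'.asIdeal from hqq')
    let t (n : ℕ) (L : Ideal R) : Ideal R := q.asIdeal ⊔ Ideal.span {x ^ n} * L
    have ht (n : ℕ) (L : Ideal R) : q.asIdeal ≤ t n L := le_sup_left
    have htmono (n : ℕ) : StrictMonoOn (t n) (Set.Ici q'.asIdeal) := by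
      intro L hL L' hL' hLL'
      refine lt_of_le_of_ne (sup_le_sup_left (Ideal.mul_mono_right hLL'.le) _) fun heq ↦ ?_
      refine hLL'.not_ge fun y hy ↦ ?_
      have hmem : x ^ n * y ∈ t n L := heq ▸ Ideal.mem_sup_right
        (Ideal.mul_mem_mul (Ideal.mem_span_singleton_self _) hy)
      obtain ⟨a, ha, b, hb, hab⟩ := Submodule.mem_sup.1 hmem
      obtain ⟨z, hz, rfl⟩ := Ideal.mem_span_singleton_mul.1 hb
      have hq : x ^ n * (y - z) ∈ q.asIdeal := by
        rwa [_root_.mul_sub, ← hab, add_sub_cancel_right]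
      have hyz := (q.2.mem_or_mem hq).resolve_left fun h ↦ hx (q.2.mem_of_pow_mem _ h)
      simpa using L.add_mem (hL (hle hyz)) hz
    have hanti {I J : Ideal R} (hI : q.asIdeal ≤ I) (hIJ : I ≤ J) :
        IsWellFounded.rank (α := α) (· > ·) (g J) ≤ IsWellFounded.rank (α := α) (· > ·) (g I) :=
      WellFoundedGT.rank_strictAnti.antitone (hg.monotoneOn hI (hI.trans hIJ) hIJ)
    have key (n : ℕ) : IsWellFounded.rank (α := α) (· > ·) (g ⊤) + ω ^ (d : Ordinal.{v}) * n ≤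
        IsWellFounded.rank (α := α) (· > ·) (g (t n ⊤)) := by
      induction n with
      | zero => simpa using hanti (ht 0 ⊤) le_top
      | succ n ihn =>
        rw [Nat.cast_succ, mul_add, mul_one, ← add_assoc]
        refine (add_le_add_left ihn _).trans ?_
        refine (ih q' hq' (g ∘ t n)
          (hg.comp (htmono n) fun L _ ↦ ht n L)).trans (hanti (ht _ _) ?_)
        refine sup_le_sup_left ?_ _
        rw [Ideal.mul_top, Ideal.span_singleton_le_iff_mem, pow_succ]
        exact Ideal.mul_mem_mul (Ideal.mem_span_singleton_self _) hx'
    by_contra! hlt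
    rw [Nat.cast_succ] at hlt
    obtain ⟨c, hc, hc'⟩ := (lt_add_iff (opow_pos _ omega0_pos).ne').1 hlt
    obtain ⟨n, hn⟩ := lt_omega0_opow_succ.1 hc
    exact (hc'.trans_lt (add_lt_add_right hn _)).not_ge ((key n).trans (hanti le_rfl (ht n ⊤)))

theorem omega0_opow_le_moduleLength_of_le_supportDim {R : Type u} [CommRing R] [IsNoetherianRing R]
    {M : Type v} [AddCommGroup M] [Module R M] [Module.Finite R M] {d : ℕ}
    (hd : d ≤ Module.supportDim R M) : ω ^ (d : Ordinal.{v}) ≤ moduleLength R M := by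
  obtain ⟨l, hl⟩ := Order.le_krullDim_iff.1 hd
  have hmem : Module.annihilator R M ≤ l.head.1.asIdeal :=
    Module.mem_support_iff_of_finite.1 l.head.2
  obtain ⟨q, hqmin, hq⟩ := Ideal.exists_minimalPrimes_le hmem
  have hass := Module.associatedPrimes.minimalPrimes_annihilator_subset_associatedPrimes R M hqmin
  obtain ⟨hqp, m, hm⟩ := isAssociatedPrime_iff.1 hass
  have hker (r : R) : r ∈ q ↔ r • m = 0 := by rw [hm]; simp [Submodule.mem_colon_singleton]
  have hcoh : d ≤ Order.coheight (⟨q, hqp⟩ : PrimeSpectrum R) := by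
    let l' : LTSeries (PrimeSpectrum R) := l.map Subtype.val fun _ _ h ↦ h
    have := Order.length_le_coheight (x := (⟨q, hqp⟩ : PrimeSpectrum R)) (p := l') hq
    rwa [show l'.length = d from hl] at this
  have hmono : StrictMonoOn (fun L : Ideal R ↦ Submodule.map (LinearMap.toSpanSingleton R M m) L)
      (Set.Ici q) := by
    intro L hL L' hL' hLL'
    refine lt_of_le_of_ne (Submodule.map_mono hLL'.le) fun heq ↦ hLL'.not_ge fun y hy ↦ ?_
    obtain ⟨z, hz, hzy⟩ : LinearMap.toSpanSingleton R M m y ∈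
        Submodule.map (LinearMap.toSpanSingleton R M m) L := heq.symm.le (Submodule.mem_map_of_mem hy)
    have : y - z ∈ q := by
      rw [hker, sub_smul, sub_eq_zero]
      exact hzy.symm
    simpa using L.add_mem (hL this) hz
  exact le_add_self.trans ((PrimeSpectrum.rank_add_omega0_opow_le_of_le_coheight d ⟨q, hqp⟩ hcoh _
    hmono).trans (WellFoundedGT.rank_strictAnti.antitone bot_le))

/-- For a nonzero finitely generated module `M` over a finite-dimensional Noetherian ring,
the degree (base-`ω` logarithm) of the ordinal length of `M` equals the Krull dimension of `M`
(the Krull dimension of `R / Ann_R M`). -/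
theorem log_moduleLength_eq_dim
    (R : Type u) [CommRing R] [IsNoetherianRing R] (hdim : ringKrullDim R < ⊤)
    (M : Type v) [AddCommGroup M] [Module R M] [Module.Finite R M] [Nontrivial M]
    (d : ℕ) (hd : ringKrullDim (R ⧸ Module.annihilator R M) = d) :
    Ordinal.log ω (moduleLength R M) = d := by
  rw [← Module.supportDim_eq_ringKrullDim_quotient_annihilator] at hd
  have hlow := omega0_opow_le_moduleLength_of_le_supportDim hd.ge
  have hup := moduleLength_lt_omega0_opow_of_supportDim_lt (d + 1) M
    (by rw [hd]; exact_mod_cast d.lt_succ_self)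
  rw [Nat.cast_succ] at hup
  exact (log_eq_iff one_lt_omega0 ((opow_pos _ omega0_pos).trans_le hlow).ne' _).2 ⟨hlow, hup⟩
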